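/- Let (A,Λ) be an associative form ring with 1, n ≥ 3, and let (I,Γ), (J,Δ) be form ideals of (A,Λ). Then for any i ≠ j and any a, a₁, a₂ ∈ (I,Γ), b, b₁, b₂ ∈ (J,Δ) (with membership taken relative to the position in question), the following congruences hold modulo EU(2n,(I,Γ)∘(J,Δ)): (1) Y_ij(a₁+a₂, b) ≡ Y_ij(a₁,b)·Y_ij(a₂,b); (2) Y_ij(a, b₁+b₂) ≡ Y_ij(a,b₁)·Y_ij(a,b₂); (3) Y_ij(a,b)⁻¹ ≡ Y_ij(−a,b) ≡ Y_ij(a,−b); (4) for i ≠ ±j, Y_ij(ab₁, b₂) ≡ Y_ij(a₁, a₂b) ≡ e; (5) Y_{i,−i}(b̄₁ab₁, b₂) ≡ Y_{i,−i}(a₁, ā₂ba₂) ≡ e. Here x ≡ y modulo a subgroup H means xy⁻¹ ∈ H. -/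

import Mathlib

open Matrix
open scoped commutatorElement

/-- Bak's form ring data on a ring `A`: an involution `bar`, a central symmetry
`λ` with `λ λ̄ = 1`, and a form parameter `Λ`. -/
structure FormRingData (A : Type*) [Ring A] where
  bar : A →+ A
  bar_mul : ∀ a b : A, bar (a * b) = bar b * bar a
  bar_bar : ∀ a : A, bar (bar a) = a
  lam : A
  lam_comm : ∀ a : A, lam * a = a * lam
  lam_bar : lam * bar lam = 1
  Lambda : AddSubgroup A
  lambdaMin_mem : ∀ c : A, c - lam * bar c ∈ Lambda
  lambdaMax_mem : ∀ x ∈ Lambda, x = -(lam * bar x)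
  lambda_conj : ∀ (c : A), ∀ x ∈ Lambda, c * x * bar c ∈ Lambda

namespace FormRingData

variable {A : Type*} [Ring A]

/-- Integral powers of the symmetry `λ`; negative powers use `λ̄ = λ⁻¹`. -/
def lpow (D : FormRingData A) (k : ℤ) : A :=
  if 0 ≤ k then D.lam ^ k.toNat else (D.bar D.lam) ^ (-k).toNat

end FormRingData

/-- The index set `Ω = {1,…,n,−n,…,−1}`, coded as `Fin n × Bool`
(second component `true` = positive index). -/
abbrev Idx (n : ℕ) := Fin n × Bool

namespace Idx

/-- The involution `i ↦ −i` on indices. -/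
def neg {n : ℕ} (i : Idx n) : Idx n := (i.1, !i.2)

/-- The sign `ε(i) ∈ {±1}`. -/
def eps {n : ℕ} (i : Idx n) : ℤ := if i.2 then 1 else -1

theorem neg_ne {n : ℕ} (i : Idx n) : neg i ≠ i := by
  simp [neg, Prod.ext_iff]

theorem neg_injective {n : ℕ} : Function.Injective (neg (n := n)) := by
  intro i j h
  simp only [neg, Prod.mk.injEq] at h
  refine Prod.ext h.1 ?_
  have h2 := h.2
  cases hi : i.2 <;> cases hj : j.2 <;> simp_all

theorem neg_neg {n : ℕ} (i : Idx n) : neg (neg i) = i := by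
  simp [neg]

end Idx

/-- `GL(2n, A)`, realised as the units of the `Ω × Ω` matrix ring over `A`. -/
abbrev GLn (A : Type*) [Ring A] (n : ℕ) := (Matrix (Idx n) (Idx n) A)ˣ

section aux

theorem one_add_mul_one_sub {R : Type*} [Ring R] {X : R} (h : X * X = 0) :
    (1 + X) * (1 - X) = 1 := by
  have hh : (1 + X) * (1 - X) = 1 - X * X := by noncomm_ring
  rw [hh, h, sub_zero]

theorem one_sub_mul_one_add {R : Type*} [Ring R] {X : R} (h : X * X = 0) :
    (1 - X) * (1 + X) = 1 := by
  have hh : (1 - X) * (1 + X) = 1 - X * X := by noncomm_ring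
  rw [hh, h, sub_zero]

theorem stdBasisMatrix_neg' {A : Type*} [Ring A] {n : ℕ} (i j : Idx n) (c : A) :
    Matrix.single i j (-c) = -Matrix.single i j c := by
  refine eq_neg_of_add_eq_zero_left ?_
  rw [← Matrix.single_add]
  simp

end aux

namespace FormRingData

variable {A : Type*} [Ring A] {n : ℕ}

/-- The off-diagonal part of a short root element. -/
def Xmat (D : FormRingData A) (i j : Idx n) (c : A) : Matrix (Idx n) (Idx n) A :=
  Matrix.single i j c -
    Matrix.single (Idx.neg j) (Idx.neg i) (D.lpow ((Idx.eps j - Idx.eps i) / 2) * D.bar c)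

theorem Xmat_mul (D : FormRingData A) {i j : Idx n} (hij : i ≠ j) (c c' : A) :
    D.Xmat i j c * D.Xmat i j c' = 0 := by
  unfold Xmat
  rw [sub_mul, mul_sub, mul_sub,
    Matrix.single_mul_single_of_ne _ _ _ _ (Ne.symm hij),
    Matrix.single_mul_single_of_ne _ _ _ _ (Ne.symm (Idx.neg_ne j)),
    Matrix.single_mul_single_of_ne _ _ _ _ (Idx.neg_ne i),
    Matrix.single_mul_single_of_ne _ _ _ _ (fun h => hij (Idx.neg_injective h))]
  simp

theorem Xmat_neg (D : FormRingData A) (i j : Idx n) (c : A) :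
    D.Xmat i j (-c) = -D.Xmat i j c := by
  unfold Xmat
  rw [map_neg, mul_neg, stdBasisMatrix_neg', stdBasisMatrix_neg']
  abel

/-- The elementary short root unipotent `T_{ij}(c)`, for `i ≠ ±j`
(with junk value `1` when `i = j`). -/
def TS (D : FormRingData A) (i j : Idx n) (c : A) : GLn A n :=
  if h : i = j then 1 else
    { val := 1 + D.Xmat i j c
      inv := 1 + D.Xmat i j (-c)
      val_inv := by
        rw [D.Xmat_neg, ← sub_eq_add_neg]
        exact one_add_mul_one_sub (D.Xmat_mul h c c)
      inv_val := by
        rw [D.Xmat_neg, ← sub_eq_add_neg]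
        exact one_sub_mul_one_add (D.Xmat_mul h c c) }

/-- The elementary long root unipotent `T_{i,−i}(c)`. -/
def TL (D : FormRingData A) (i : Idx n) (c : A) : GLn A n where
  val := 1 + Matrix.single i (Idx.neg i) c
  inv := 1 + Matrix.single i (Idx.neg i) (-c)
  val_inv := by
    rw [stdBasisMatrix_neg', ← sub_eq_add_neg]
    exact one_add_mul_one_sub (Matrix.single_mul_single_of_ne _ _ _ _ (Idx.neg_ne i) _)
  inv_val := by
    rw [stdBasisMatrix_neg', ← sub_eq_add_neg]
    exact one_sub_mul_one_add (Matrix.single_mul_single_of_ne _ _ _ _ (Idx.neg_ne i) _)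

/-- The elementary unitary transvection `T_{ij}(c)` (long or short root type
according to whether `j = −i`). -/
def T (D : FormRingData A) (i j : Idx n) (c : A) : GLn A n :=
  if j = Idx.neg i then D.TL i c else D.TS i j c

/-- The elementary commutator `Y_{ij}(a,b) = [T_{ij}(a), T_{ji}(b)]`. -/
def Y (D : FormRingData A) (i j : Idx n) (a b : A) : GLn A n :=
  ⁅D.T i j a, D.T j i b⁆

/-- The elementary conjugate `Z_{ij}(a,c) = T_{ji}(c) T_{ij}(a) T_{ji}(−c)`. -/
def Z (D : FormRingData A) (i j : Idx n) (a c : A) : GLn A n :=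
  D.T j i c * D.T i j a * D.T j i (-c)

/-- The set of elementary unitary transvections of level `(I,Γ)`. -/
def transvGen (D : FormRingData A) (n : ℕ) (I Γ : AddSubgroup A) : Set (GLn A n) :=
  {x | ∃ i j : Idx n, i ≠ j ∧ i ≠ Idx.neg j ∧ ∃ c ∈ I, x = D.TS i j c} ∪
    {x | ∃ i : Idx n, ∃ g ∈ Γ, x = D.TL i (D.lpow (-(Idx.eps i + 1) / 2) * g)}

/-- The unrelative elementary subgroup `FU(2n, I, Γ)`. -/
def FU (D : FormRingData A) (n : ℕ) (I Γ : AddSubgroup A) : Subgroup (GLn A n) :=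
  Subgroup.closure (D.transvGen n I Γ)

/-- The absolute elementary unitary group `EU(2n, A, Λ)`. -/
def EUmax (D : FormRingData A) (n : ℕ) : Subgroup (GLn A n) :=
  D.FU n ⊤ D.Lambda

/-- The relative elementary subgroup `EU(2n, I, Γ)`: the normal closure of
`FU(2n, I, Γ)` in `EU(2n, A, Λ)`. -/
def EU (D : FormRingData A) (n : ℕ) (I Γ : AddSubgroup A) : Subgroup (GLn A n) :=
  Subgroup.closure {x | ∃ g ∈ D.EUmax n, ∃ t ∈ D.transvGen n I Γ, x = g * t * g⁻¹}

/-- The additive subgroup generated by products `st`, `s ∈ S`, `t ∈ T`. -/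
def mulSub (S T : AddSubgroup A) : AddSubgroup A :=
  AddSubgroup.closure {x | ∃ a ∈ S, ∃ b ∈ T, x = a * b}

/-- The symmetrised product `ST + TS` of two (additive subgroups underlying)
two-sided ideals. -/
def symI (S T : AddSubgroup A) : AddSubgroup A :=
  mulSub S T ⊔ mulSub T S

/-- The minimal relative form parameter `Γ_min(K)` of level `K`. -/
def gammaMin (D : FormRingData A) (K : AddSubgroup A) : AddSubgroup A :=
  AddSubgroup.closure
    ({x | ∃ a ∈ K, x = a - D.lam * D.bar a} ∪
      {x | ∃ a ∈ K, ∃ c ∈ D.Lambda, x = a * c * D.bar a})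

/-- The relative form parameter `ˢΓ = ⟨ b γ b̄ ∣ b ∈ S, γ ∈ Γ ⟩`. -/
def conjPar (D : FormRingData A) (S Γ : AddSubgroup A) : AddSubgroup A :=
  AddSubgroup.closure {x | ∃ b ∈ S, ∃ g ∈ Γ, x = b * g * D.bar b}

/-- The relative form parameter of the symmetrised product
`(I,Γ)∘(J,Δ) = (IJ+JI, Γ_min(IJ+JI) + ᴶΓ + ᴵΔ)`. -/
def symG (D : FormRingData A) (I Γ J Δ : AddSubgroup A) : AddSubgroup A :=
  D.gammaMin (symI I J) ⊔ D.conjPar J Γ ⊔ D.conjPar I Δ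

/-- The elementary subgroup `EU(2n, (I,Γ)∘(J,Δ))` of the symmetrised product. -/
def EUsym (D : FormRingData A) (n : ℕ) (I Γ J Δ : AddSubgroup A) : Subgroup (GLn A n) :=
  D.EU n (symI I J) (D.symG I Γ J Δ)

/-- Position-dependent membership `a ∈ (I,Γ)` at position `(i,j)`:
`a ∈ I` for a short root position, `a ∈ λ^{−(ε(i)+1)/2}Γ` for a long one. -/
def pmem (D : FormRingData A) (I Γ : AddSubgroup A) {n : ℕ} (i j : Idx n) (a : A) : Prop :=
  if j = Idx.neg i then ∃ g ∈ Γ, a = D.lpow (-(Idx.eps i + 1) / 2) * g else a ∈ I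

end FormRingData

/-- A form ideal `(I,Γ)` of the form ring `(A,Λ)`. -/
structure FormIdeal {A : Type*} [Ring A] (D : FormRingData A) where
  I : AddSubgroup A
  Gamma : AddSubgroup A
  mul_mem_left : ∀ (c : A), ∀ x ∈ I, c * x ∈ I
  mul_mem_right : ∀ (c : A), ∀ x ∈ I, x * c ∈ I
  bar_mem : ∀ x ∈ I, D.bar x ∈ I
  gammaMin_le : D.gammaMin I ≤ Gamma
  gamma_le_I : Gamma ≤ I
  gamma_le_Lambda : Gamma ≤ D.Lambda
  gamma_conj : ∀ (c : A), ∀ x ∈ Gamma, c * x * D.bar c ∈ Gamma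

/-!
Work modulo `N = EU((I,Γ)∘(J,Δ))`, which is normalised by every `T_{kl}(c)`. The main point is that
`Y_{ij}(a,b)` commutes modulo `N` with all of `T_{ij}(A,Λ)` and `T_{ji}(A,Λ)`. For a third index
`k`, the Hall–Witt identity and the Steinberg relations show that it commutes with `T_{ik}(c)`: the
only surviving terms are transvections of level `(I,Γ)∘(J,Δ)`, with coefficients such as `abc`.
Conjugating the roots by `(i,j) ↦ (−j,−i)` it also commutes with `T_{kj}(c)`, hence with
`[T_{ik}(c), T_{kj}(1)] = T_{ij}(c)`; a long `T_{i,−i}(c)` is instead obtained from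
`[T_{k,−k}(c), T_{−k,−i}(1)]`. Modulo `N` both the conjugation by `x₁` and the order of the factors
in `[x₁x₂,y] = x₁[x₂,y]x₁⁻¹·[x₁,y]` may therefore be ignored, which is additivity of `Y_{ij}`; the
inverses come from `0 = −a + a`, and the vanishing statements from `T_{kl}(c)` normalising `N`.
-/

section CommutatorModSubgroup

variable {G : Type*} [Group G] {N : Subgroup G}

open Subgroup

/-- The centralizer of `z` modulo `N`: the elements of the normalizer of `N` (so that `N` may be
factored out) that commute with `z` up to an element of `N`. -/
def centralizerMod (N : Subgroup G) (z : G) : Subgroup G where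
  carrier := {g | g ∈ normalizer N ∧ ⁅z, g⁆ ∈ N}
  one_mem' := ⟨one_mem _, by simp⟩
  mul_mem' := by
    rintro g h ⟨hg, hzg⟩ ⟨hh, hzh⟩
    refine ⟨mul_mem hg hh, ?_⟩
    rw [commutatorElement_mul_right_eq_mul_conj, mul_assoc ⁅z, g⁆, mul_assoc ⁅z, g⁆]
    exact mul_mem hzg ((mem_normalizer_iff.1 hg _).1 hzh)
  inv_mem' := by
    rintro g ⟨hg, hzg⟩
    refine ⟨inv_mem hg, ?_⟩
    rw [commutatorElement_inv_right, ← commutatorElement_inv]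
    exact (mem_normalizer_iff''.1 hg _).1 (inv_mem hzg)

theorem commutator_mem_of_mem_left {x y : G} (hx : x ∈ N) (hy : y ∈ normalizer N) :
    ⁅x, y⁆ ∈ N :=
  le_normalizer_iff_commutator_le_left.1 le_rfl (commutator_mem_commutator hx hy)

theorem commutator_mem_normalizer {x y : G} (hx : x ∈ normalizer N) (hy : y ∈ normalizer N) :
    ⁅x, y⁆ ∈ normalizer N :=
  commutator_le_self _ (commutator_mem_commutator hx hy)

namespace centralizerMod

theorem mem_of_commute {z g : G} (hg : g ∈ normalizer N) (h : Commute z g) :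
    g ∈ centralizerMod N z :=
  ⟨hg, h.commutator_eq ▸ one_mem N⟩

theorem mem_symm {z g : G} (hz : z ∈ normalizer N) (h : g ∈ centralizerMod N z) :
    z ∈ centralizerMod N g :=
  ⟨hz, commutatorElement_inv z g ▸ inv_mem h.2⟩

theorem mem_inv {z g : G} (hz : z ∈ normalizer N) (h : g ∈ centralizerMod N z) :
    g ∈ centralizerMod N z⁻¹ :=
  mem_symm h.1 (inv_mem (mem_symm hz h))

/-- A form of the Hall–Witt identity modulo `N`: `⁅x, y⁆ = x * (y * x * y⁻¹)⁻¹`, and `t` commutes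
with `y * x * y⁻¹` as soon as `y⁻¹ * t * y = ⁅y⁻¹, t⁆ * t` commutes with `x`. -/
theorem mem_commutator {x y t : G} (hx : x ∈ normalizer N) (hy : y ∈ normalizer N)
    (ht : t ∈ centralizerMod N x) (hyt : ⁅y⁻¹, t⁆ ∈ centralizerMod N x) :
    t ∈ centralizerMod N ⁅x, y⁆ := by
  have hconj : y⁻¹ * t * y ∈ centralizerMod N x := by
    simpa [commutatorElement_def] using mul_mem hyt ht
  have hyx : y * x * y⁻¹ ∈ centralizerMod N t := by
    refine ⟨mul_mem (mul_mem hy hx) (inv_mem hy), ?_⟩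
    have := (mem_normalizer_iff.1 hy _).1 (mem_symm hx hconj).2
    rw [conjugate_commutatorElement] at this
    simpa [mul_assoc] using this
  have hxy : ⁅x, y⁆ = x * (y * x * y⁻¹)⁻¹ := by simp [commutatorElement_def, mul_assoc]
  rw [hxy]
  exact mem_symm ht.1 (mul_mem (mem_symm hx ht) (inv_mem hyx))

theorem commutator_mul_left {x₁ x₂ y : G} (hx₁ : x₁ ∈ centralizerMod N ⁅x₂, y⁆)
    (hy : y ∈ centralizerMod N ⁅x₂, y⁆) :
    ⁅x₁ * x₂, y⁆ * (⁅x₁, y⁆ * ⁅x₂, y⁆)⁻¹ ∈ N := by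
  have hconj : y * x₁⁻¹ * y⁻¹ ∈ centralizerMod N ⁅x₂, y⁆ :=
    mul_mem (mul_mem hy (inv_mem hx₁)) (inv_mem hy)
  have hdefect : ⁅x₁ * x₂, y⁆ * (⁅x₁, y⁆ * ⁅x₂, y⁆)⁻¹ =
      x₁ * ⁅⁅x₂, y⁆, y * x₁⁻¹ * y⁻¹⁆ * x₁⁻¹ := by
    simp only [commutatorElement_def]; group
  rw [hdefect]
  exact (mem_normalizer_iff.1 hx₁.1 _).1 hconj.2

theorem commutator_mul_right {x y₁ y₂ : G} (hx : x ∈ normalizer N)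
    (hy₁ : y₁ ∈ centralizerMod N ⁅x, y₂⁆) :
    ⁅x, y₁ * y₂⁆ * (⁅x, y₁⁆ * ⁅x, y₂⁆)⁻¹ ∈ N := by
  have hdefect : ⁅x, y₁ * y₂⁆ * (⁅x, y₁⁆ * ⁅x, y₂⁆)⁻¹ =
      ⁅x, y₁⁆ * ⁅⁅x, y₂⁆, y₁⁆⁻¹ * ⁅x, y₁⁆⁻¹ := by
    simp only [commutatorElement_def]; group
  rw [hdefect]
  exact (mem_normalizer_iff.1 (commutator_mem_normalizer hx hy₁.1) _).1 (inv_mem hy₁.2)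

end centralizerMod

end CommutatorModSubgroup

/-- The obstruction to `1 + Z`, `Z = X * Y - Y * X`, being the commutator of `1 + X` and `1 + Y` is
`W = Z * Y`, which is zero for a pair of short roots but not for a long and a short one. -/
theorem one_add_mul_one_add {R : Type*} [Ring R] {X Y Z W : R} (hXY : X * Y = Y * X + Z)
    (hZX : Z * X = 0) (hZY : Z * Y = W) (hWY : W * Y = 0) (hZW : Z * W = 0) :
    (1 + X) * (1 + Y) = (1 + Z) * (1 - W) * (1 + Y) * (1 + X) := by
  have hZ : (1 + Z) * (1 - W) = 1 + Z - W := by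
    rw [mul_sub, mul_one, add_mul, one_mul, hZW, add_zero]
  have hZWY : (1 + Z - W) * (1 + Y) = 1 + Y + Z := by
    simp only [add_mul, sub_mul, mul_add, one_mul, mul_one, hZY, hWY]; abel
  rw [hZ, hZWY]
  simp only [add_mul, mul_add, one_mul, mul_one, hZX, hXY]; abel

theorem commutatorElement_eq_of_mul_eq {G : Type*} [Group G] {x y u : G}
    (h : x * y = u * y * x) : ⁅x, y⁆ = u := by
  rw [commutatorElement_def, h]; group

namespace Idx

variable {n : ℕ} {i j : Idx n}

theorem eps_neg (i : Idx n) : eps (neg i) = -eps i := by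
  rcases i with ⟨i, _ | _⟩ <;> simp [eps, neg]

theorem eps_eq_or (i : Idx n) : eps i = 1 ∨ eps i = -1 := by
  rcases i with ⟨i, _ | _⟩ <;> simp [eps]

theorem ne_of_fst_ne (h : i.1 ≠ j.1) : i ≠ j := fun e => h (congrArg Prod.fst e)

theorem neg_ne_of_fst_ne (h : i.1 ≠ j.1) : neg i ≠ j := ne_of_fst_ne (i := neg i) h

theorem ne_neg_of_fst_ne (h : i.1 ≠ j.1) : i ≠ neg j := ne_of_fst_ne (j := neg j) h

theorem eq_neg_or_fst_ne (h : i ≠ j) : j = neg i ∨ i.1 ≠ j.1 := by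
  rcases i with ⟨i, _ | _⟩ <;> rcases j with ⟨j, _ | _⟩ <;> simp_all [neg, eq_comm, em]

end Idx

namespace FormRingData

variable {A : Type*} [Ring A] {n : ℕ} (D : FormRingData A)

theorem bar_one : D.bar 1 = 1 := by
  simpa [D.bar_bar] using (D.bar_mul 1 (D.bar 1)).symm

/-- The symmetry `λ` as a unit of `A`, with inverse `λ̄`. -/
def lamUnit : Aˣ where
  val := D.lam
  inv := D.bar D.lam
  val_inv := D.lam_bar
  inv_val := by rw [← D.lam_comm, D.lam_bar]

theorem lpow_eq_zpow (k : ℤ) : D.lpow k = ↑(D.lamUnit ^ k) := by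
  unfold lpow
  split_ifs with hk
  · conv_rhs => rw [← Int.toNat_of_nonneg hk, zpow_natCast, Units.val_pow_eq_pow_val]
    rfl
  · have hk' : k = -((-k).toNat : ℤ) := by omega
    conv_rhs => rw [hk', _root_.zpow_neg, zpow_natCast, ← inv_pow, Units.val_pow_eq_pow_val]
    rfl

theorem lpow_zero : D.lpow 0 = 1 := by simp [lpow]

theorem lpow_add (k l : ℤ) : D.lpow (k + l) = D.lpow k * D.lpow l := by
  simp only [lpow_eq_zpow, _root_.zpow_add, Units.val_mul]

theorem commute_lpow (k : ℤ) (a : A) : Commute (D.lpow k) a := by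
  rw [lpow_eq_zpow]
  exact Commute.units_zpow_left (u := D.lamUnit) (D.lam_comm a) k

theorem bar_lpow (k : ℤ) : D.bar (D.lpow k) = D.lpow (-k) := by
  have bar_pow (x : A) (m : ℕ) : D.bar (x ^ m) = D.bar x ^ m := by
    induction m with
    | zero => simp [D.bar_one]
    | succ m ih => rw [pow_succ, D.bar_mul, ih, pow_succ']
  rcases lt_trichotomy k 0 with hk | rfl | hk
  · simp [lpow, hk.le, hk.not_ge, bar_pow, D.bar_bar]
  · simp [lpow, D.bar_one]
  · simp [lpow, hk.le, hk.not_ge, bar_pow]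

/-- The coefficient `−λ^{(ε(j)−ε(i))/2} c̄` standing at position `(−j,−i)` in `T_{ij}(c)`. -/
def mirror (i j : Idx n) (c : A) : A :=
  -(D.lpow ((Idx.eps j - Idx.eps i) / 2) * D.bar c)

theorem mirror_mul_mirror (i j k : Idx n) (c d : A) :
    D.mirror j k d * D.mirror i j c = -D.mirror i k (c * d) := by
  have hexp : (Idx.eps k - Idx.eps i) / 2 =
      (Idx.eps k - Idx.eps j) / 2 + (Idx.eps j - Idx.eps i) / 2 := by
    have := i.eps_eq_or; have := j.eps_eq_or; have := k.eps_eq_or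
    omega
  rw [mirror, mirror, mirror, hexp, lpow_add, D.bar_mul, neg_mul_neg, _root_.neg_neg,
    (D.commute_lpow _ (D.bar d)).symm.mul_mul_mul_comm]

theorem mirror_mirror (i j : Idx n) (c : A) :
    D.mirror (Idx.neg j) (Idx.neg i) (D.mirror i j c) = c := by
  have hexp : (-Idx.eps i - -Idx.eps j) / 2 + -((Idx.eps j - Idx.eps i) / 2) = 0 := by omega
  rw [mirror, mirror, map_neg, mul_neg, _root_.neg_neg, D.bar_mul, D.bar_bar, bar_lpow,
    ← (D.commute_lpow _ c).eq, ← mul_assoc, ← lpow_add, Idx.eps_neg, Idx.eps_neg, hexp, lpow_zero,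
    one_mul]

/-- The additive group `λ^{−(ε(i)+1)/2}Γ` of the coefficients allowed at the long root position
`(i,−i)`. -/
def longCoeff (Γ : AddSubgroup A) (i : Idx n) : AddSubgroup A where
  carrier := {a | ∃ g ∈ Γ, a = D.lpow (-(Idx.eps i + 1) / 2) * g}
  zero_mem' := ⟨0, zero_mem Γ, by simp⟩
  add_mem' := by
    rintro _ _ ⟨g, hg, rfl⟩ ⟨h, hh, rfl⟩
    exact ⟨g + h, add_mem hg hh, (mul_add _ _ _).symm⟩
  neg_mem' := by
    rintro _ ⟨g, hg, rfl⟩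
    exact ⟨-g, neg_mem hg, (mul_neg _ _).symm⟩

variable {D} {Γ Γ' : AddSubgroup A} {i j : Idx n} {a b : A}

theorem longCoeff_mono (h : Γ ≤ Γ') : D.longCoeff Γ i ≤ D.longCoeff Γ' i := by
  rintro _ ⟨g, hg, rfl⟩
  exact ⟨g, h hg, rfl⟩

theorem mem_longCoeff_neg_iff :
    a ∈ D.longCoeff Γ (Idx.neg i) ↔ ∃ g ∈ Γ, a = D.lpow ((Idx.eps i - 1) / 2) * g := by
  have hexp : -(Idx.eps (Idx.neg i) + 1) = Idx.eps i - 1 := by rw [Idx.eps_neg]; ring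
  rw [← hexp]
  rfl

theorem lpow_mul_mem_longCoeff (ha : a ∈ D.longCoeff Γ i) :
    D.lpow ((Idx.eps j - Idx.eps (Idx.neg i)) / 2) * a ∈ D.longCoeff Γ (Idx.neg j) := by
  obtain ⟨g, hg, rfl⟩ := ha
  refine ⟨g, hg, ?_⟩
  rw [← mul_assoc, ← lpow_add, Idx.eps_neg, Idx.eps_neg]
  congr 2
  have := i.eps_eq_or; have := j.eps_eq_or
  omega

theorem bar_mul_mul_mem_longCoeff (hΓ : ∀ g ∈ Γ, D.bar b * g * D.bar (D.bar b) ∈ Γ')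
    (ha : a ∈ D.longCoeff Γ i) : D.bar b * a * b ∈ D.longCoeff Γ' i := by
  obtain ⟨g, hg, rfl⟩ := ha
  refine ⟨_, hΓ g hg, ?_⟩
  rw [← mul_assoc, ← (D.commute_lpow _ (D.bar b)).eq, D.bar_bar]
  simp only [mul_assoc]

theorem mirror_mul_mul_mem_longCoeff (hΓ : ∀ g ∈ Γ, D.bar b * g * D.bar (D.bar b) ∈ Γ')
    (ha : a ∈ D.longCoeff Γ i) :
    D.mirror (Idx.neg i) j b * a * b ∈ D.longCoeff Γ' (Idx.neg j) := by
  have := neg_mem (lpow_mul_mem_longCoeff (j := j) (bar_mul_mul_mem_longCoeff hΓ ha))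
  simpa only [mirror, neg_mul, mul_assoc] using this

theorem mirror_eq_self (ha : a ∈ D.longCoeff D.Lambda i) : D.mirror i (Idx.neg i) a = a := by
  obtain ⟨g, hg, rfl⟩ := ha
  have hbar : D.bar g = -(D.lpow (-1) * g) := by
    conv_rhs => rw [D.lambdaMax_mem g hg]
    have hlam : D.lpow (-1) * D.lam = 1 := by
      rw [show D.lpow (-1) = D.bar D.lam by simp [lpow], ← D.lam_comm, D.lam_bar]
    rw [mul_neg, _root_.neg_neg, ← mul_assoc, hlam, one_mul]
  have hexp : (-Idx.eps i - Idx.eps i) / 2 + -(-(Idx.eps i + 1) / 2) + -1 =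
      -(Idx.eps i + 1) / 2 := by
    have := i.eps_eq_or
    omega
  rw [mirror, D.bar_mul, bar_lpow, hbar, Idx.eps_neg, ← (D.commute_lpow _ _).eq, mul_neg, mul_neg,
    _root_.neg_neg, ← mul_assoc, ← mul_assoc, ← lpow_add, ← lpow_add, hexp]

end FormRingData

/-! ### Steinberg relations -/

theorem commute_one_add_one_add {R : Type*} [Ring R] {X Y : R} (hXY : X * Y = 0)
    (hYX : Y * X = 0) : Commute (1 + X) (1 + Y) := by
  have h : Commute X Y := hXY.trans hYX.symm
  exact ((Commute.one_left _).add_left ((Commute.one_right X).add_right h))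

namespace FormRingData

variable {A : Type*} [Ring A] {n : ℕ} {D : FormRingData A} {i j k l : Idx n} {a b c d : A}

theorem Xmat_eq (D : FormRingData A) (i j : Idx n) (c : A) :
    D.Xmat i j c = single i j c + single (Idx.neg j) (Idx.neg i) (D.mirror i j c) := by
  rw [Xmat, mirror, sub_eq_add_neg, single_neg]

theorem Xmat_mirror (D : FormRingData A) (i j : Idx n) (c : A) :
    D.Xmat (Idx.neg j) (Idx.neg i) (D.mirror i j c) = D.Xmat i j c := by
  rw [Xmat_eq, Xmat_eq, mirror_mirror, Idx.neg_neg, Idx.neg_neg, add_comm]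

theorem Xmat_add (D : FormRingData A) (i j : Idx n) (c d : A) :
    D.Xmat i j (c + d) = D.Xmat i j c + D.Xmat i j d := by
  simp only [Xmat, map_add, mul_add, single_add]
  abel

theorem single_mul_Xmat (D : FormRingData A) (i j k : Idx n) (c d : A)
    (h : j ≠ Idx.neg k) : single i j c * D.Xmat j k d = single i k (c * d) := by
  rw [Xmat_eq, mul_add, single_mul_single_same, single_mul_single_of_ne _ _ _ _ h, add_zero]

theorem single_mul_Xmat_of_ne (h : j ≠ k) (h' : j ≠ Idx.neg l) :
    single i j c * D.Xmat k l d = 0 := by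
  rw [Xmat_eq, mul_add, single_mul_single_of_ne _ _ _ _ h, single_mul_single_of_ne _ _ _ _ h',
    add_zero]

theorem Xmat_mul_single_of_ne (h : j ≠ k) (h' : Idx.neg i ≠ k) :
    D.Xmat i j c * single k l d = 0 := by
  rw [Xmat_eq, add_mul, single_mul_single_of_ne _ _ _ _ h, single_mul_single_of_ne _ _ _ _ h',
    add_zero]

theorem Xmat_mul_Xmat_of_ne (hjk : j ≠ k) (hjl : j ≠ Idx.neg l) (hik : Idx.neg i ≠ k)
    (hil : i ≠ l) : D.Xmat i j c * D.Xmat k l d = 0 := by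
  rw [Xmat_eq D i j, add_mul, single_mul_Xmat_of_ne hjk hjl,
    single_mul_Xmat_of_ne hik (Idx.neg_injective.ne hil), add_zero]

theorem coe_T_of_fst_ne (h : i.1 ≠ j.1) : (D.T i j c : Matrix (Idx n) (Idx n) A) =
    1 + D.Xmat i j c := by
  rw [T, if_neg (Idx.ne_neg_of_fst_ne h.symm), TS, dif_neg (Idx.ne_of_fst_ne h)]

theorem coe_T_neg (D : FormRingData A) (i : Idx n) (c : A) :
    (D.T i (Idx.neg i) c : Matrix (Idx n) (Idx n) A) = 1 + single i (Idx.neg i) c := by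
  rw [T, if_pos rfl, TL]

theorem T_mirror (h : i.1 ≠ j.1) :
    D.T (Idx.neg j) (Idx.neg i) (D.mirror i j c) = D.T i j c := by
  ext1
  rw [coe_T_of_fst_ne h, coe_T_of_fst_ne (i := Idx.neg j) (j := Idx.neg i) h.symm, Xmat_mirror]

theorem T_add (h : i ≠ j) : D.T i j (c + d) = D.T i j c * D.T i j d := by
  ext1
  rcases Idx.eq_neg_or_fst_ne h with rfl | h
  · rw [Units.val_mul, coe_T_neg, coe_T_neg, coe_T_neg, mul_add, add_mul, add_mul,
      single_mul_single_of_ne _ _ _ _ (Idx.neg_ne i), single_add]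
    simp only [one_mul, mul_one, add_zero, add_assoc]
  · rw [Units.val_mul, coe_T_of_fst_ne h, coe_T_of_fst_ne h, coe_T_of_fst_ne h, mul_add, add_mul,
      add_mul, D.Xmat_mul (Idx.ne_of_fst_ne h), Xmat_add]
    simp only [one_mul, mul_one, add_zero, add_assoc]

theorem T_zero (h : i ≠ j) : D.T i j 0 = 1 :=
  left_eq_mul.1 (by rw [← T_add h, add_zero] : D.T i j 0 = D.T i j 0 * D.T i j 0)

theorem T_inv (h : i ≠ j) : (D.T i j c)⁻¹ = D.T i j (-c) :=
  inv_eq_of_mul_eq_one_right (by rw [← T_add h, add_neg_cancel, T_zero h])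

theorem commute_T_T (hij : i.1 ≠ j.1) (hik : i.1 ≠ k.1) (hjk : j.1 ≠ k.1) :
    Commute (D.T i j c) (D.T i k d) := by
  refine Commute.units_of_val ?_
  rw [coe_T_of_fst_ne hij, coe_T_of_fst_ne hik]
  exact commute_one_add_one_add
    (Xmat_mul_Xmat_of_ne (Idx.ne_of_fst_ne hij.symm) (Idx.ne_neg_of_fst_ne hjk) (Idx.neg_ne i)
      (Idx.ne_of_fst_ne hik))
    (Xmat_mul_Xmat_of_ne (Idx.ne_of_fst_ne hik.symm) (Idx.ne_neg_of_fst_ne hjk.symm)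
      (Idx.neg_ne i) (Idx.ne_of_fst_ne hij))

theorem commute_T_neg_T (hij : i.1 ≠ j.1) :
    Commute (D.T i (Idx.neg i) c) (D.T i j d) := by
  refine Commute.units_of_val ?_
  rw [coe_T_neg, coe_T_of_fst_ne hij]
  exact commute_one_add_one_add
    (single_mul_Xmat_of_ne (Idx.neg_ne i) (Idx.neg_injective.ne (Idx.ne_of_fst_ne hij)))
    (Xmat_mul_single_of_ne (Idx.ne_of_fst_ne hij.symm) (Idx.neg_ne i))

theorem commute_T_neg_T_neg (hij : i.1 ≠ j.1) :
    Commute (D.T i (Idx.neg i) c) (D.T j (Idx.neg j) d) := by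
  refine Commute.units_of_val ?_
  rw [coe_T_neg, coe_T_neg]
  exact commute_one_add_one_add
    (single_mul_single_of_ne _ _ _ _ (Idx.neg_ne_of_fst_ne hij) _)
    (single_mul_single_of_ne _ _ _ _ (Idx.neg_ne_of_fst_ne hij.symm) _)

theorem commutator_T_T (hij : i.1 ≠ j.1) (hik : i.1 ≠ k.1) (hjk : j.1 ≠ k.1) :
    ⁅D.T i j c, D.T j k d⁆ = D.T i k (c * d) := by
  have hXY : D.Xmat i j c * D.Xmat j k d = single i k (c * d) := by
    rw [Xmat_eq D i j, add_mul, single_mul_Xmat D i j k c d (Idx.ne_neg_of_fst_ne hjk),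
      single_mul_Xmat_of_ne (Idx.neg_ne_of_fst_ne hij)
        (Idx.neg_injective.ne (Idx.ne_of_fst_ne hik)), add_zero]
  have hYX : D.Xmat j k d * D.Xmat i j c =
      -single (Idx.neg k) (Idx.neg i) (D.mirror i k (c * d)) := by
    rw [Xmat_eq D j k, add_mul, single_mul_Xmat_of_ne (Idx.ne_of_fst_ne hik.symm)
        (Idx.ne_neg_of_fst_ne hjk.symm), ← Xmat_mirror D i j,
      single_mul_Xmat _ _ _ _ _ _ (by simpa [Idx.neg_neg] using Idx.neg_ne_of_fst_ne hij.symm),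
      mirror_mul_mirror, single_neg, zero_add]
  refine commutatorElement_eq_of_mul_eq (Units.ext ?_)
  simp only [Units.val_mul, coe_T_of_fst_ne hij, coe_T_of_fst_ne hik, coe_T_of_fst_ne hjk]
  have := one_add_mul_one_add (X := D.Xmat i j c) (Y := D.Xmat j k d)
    (Z := D.Xmat i k (c * d)) (W := 0)
    (by rw [hXY, hYX, Xmat_eq, add_left_comm, neg_add_cancel, add_zero])
    (Xmat_mul_Xmat_of_ne (Idx.ne_of_fst_ne hik.symm) (Idx.ne_neg_of_fst_ne hjk.symm)
      (Idx.neg_ne i) (Idx.ne_of_fst_ne hij))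
    (Xmat_mul_Xmat_of_ne (Idx.ne_of_fst_ne hjk.symm) (Idx.neg_ne k).symm
      (Idx.neg_ne_of_fst_ne hij) (Idx.ne_of_fst_ne hik)) (zero_mul _) (mul_zero _)
  simpa only [sub_zero, mul_one] using this

theorem Xmat_mul_Xmat_neg (hij : i.1 ≠ j.1) :
    D.Xmat i j c * D.Xmat (Idx.neg i) j d = single (Idx.neg j) j (D.mirror i j c * d) := by
  rw [Xmat_eq D i j, add_mul,
    single_mul_Xmat_of_ne (Idx.ne_neg_of_fst_ne hij.symm) (Idx.neg_ne j).symm,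
    single_mul_Xmat _ _ _ _ _ _ (Idx.neg_injective.ne (Idx.ne_of_fst_ne hij)), zero_add]

theorem commutator_T_neg_T (hij : i.1 ≠ j.1) (ha : a ∈ D.longCoeff D.Lambda i) :
    ⁅D.T i (Idx.neg i) a, D.T (Idx.neg i) j b⁆ =
      D.T i j (a * b) * D.T (Idx.neg j) j (D.mirror (Idx.neg i) j b * a * b) := by
  set m := D.mirror (Idx.neg i) j b * a with hm
  have hmirror : m = -D.mirror i j (a * b) := by
    rw [← mirror_mul_mirror D i (Idx.neg i) j, mirror_eq_self ha, hm]
  have hXY : single i (Idx.neg i) a * D.Xmat (Idx.neg i) j b = single i j (a * b) :=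
    single_mul_Xmat _ _ _ _ _ _ (Idx.neg_injective.ne (Idx.ne_of_fst_ne hij))
  have hYX : D.Xmat (Idx.neg i) j b * single i (Idx.neg i) a =
      single (Idx.neg j) (Idx.neg i) m := by
    rw [Xmat_eq, add_mul, single_mul_single_of_ne _ _ _ _ (Idx.ne_of_fst_ne hij.symm),
      Idx.neg_neg, single_mul_single_same, zero_add]
  have hZY : D.Xmat i j (a * b) * D.Xmat (Idx.neg i) j b =
      -single (Idx.neg j) j (m * b) := by
    rw [Xmat_mul_Xmat_neg hij, ← neg_eq_iff_eq_neg.2 hmirror, neg_mul, single_neg]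
  have hlong : (D.T (Idx.neg j) j (m * b) : Matrix (Idx n) (Idx n) A) =
      1 + single (Idx.neg j) j (m * b) := by
    simpa only [Idx.neg_neg] using coe_T_neg D (Idx.neg j) (m * b)
  refine commutatorElement_eq_of_mul_eq (Units.ext ?_)
  simp only [Units.val_mul, coe_T_neg, coe_T_of_fst_ne hij, hlong,
    coe_T_of_fst_ne (i := Idx.neg i) hij]
  rw [← sub_neg_eq_add 1 (single (Idx.neg j) j (m * b))]
  refine one_add_mul_one_add ?_ ?_ hZY ?_ ?_
  · rw [hXY, hYX, Xmat_eq, hmirror, add_left_comm, ← single_neg, neg_add_cancel,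
      add_zero]
  · exact Xmat_mul_single_of_ne (Idx.ne_of_fst_ne hij.symm) (Idx.neg_ne i)
  · rw [neg_mul, single_mul_Xmat_of_ne (Idx.ne_neg_of_fst_ne hij.symm) (Idx.neg_ne j).symm,
      neg_zero]
  · rw [mul_neg, Xmat_mul_single_of_ne (Idx.neg_ne j).symm
      (Idx.neg_injective.ne (Idx.ne_of_fst_ne hij)), neg_zero]

theorem commutator_T_neg_T' (hij : i.1 ≠ j.1) (ha : a ∈ D.longCoeff D.Lambda (Idx.neg i)) :
    ⁅D.T (Idx.neg i) i a, D.T i j b⁆ =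
      D.T (Idx.neg i) j (a * b) * D.T (Idx.neg j) j (D.mirror i j b * a * b) := by
  simpa only [Idx.neg_neg] using commutator_T_neg_T (i := Idx.neg i) (b := b) hij ha

theorem T_neg_eq_commutator_inv_mul (hik : i.1 ≠ k.1) (hsign : i.2 = k.2)
    (hc : c ∈ D.longCoeff D.Lambda i) :
    D.T i (Idx.neg i) c =
      ⁅D.T k (Idx.neg k) c, D.T (Idx.neg k) (Idx.neg i) 1⁆⁻¹ * D.T k (Idx.neg i) c := by
  have heps : Idx.eps k = Idx.eps i := by rw [Idx.eps, Idx.eps, hsign]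
  have hck : c ∈ D.longCoeff D.Lambda k := by
    obtain ⟨g, hg, rfl⟩ := hc
    exact ⟨g, hg, by rw [heps]⟩
  have hmirror : D.mirror (Idx.neg k) (Idx.neg i) 1 = -1 := by
    rw [mirror, Idx.eps_neg, Idx.eps_neg, heps, sub_self, Int.zero_ediv, lpow_zero, D.bar_one,
      one_mul]
  rw [commutator_T_neg_T (j := Idx.neg i) hik.symm hck, hmirror, mul_one, mul_one, neg_one_mul,
    _root_.mul_inv_rev, inv_mul_cancel_right, Idx.neg_neg, T_inv (Idx.neg_ne i).symm,
    _root_.neg_neg]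

end FormRingData

namespace FormRingData

variable {A : Type*} [Ring A] {n : ℕ} {D : FormRingData A} {I Γ : AddSubgroup A} {i j : Idx n}
  {a c : A}

theorem pmem_neg_right_iff : D.pmem I Γ i (Idx.neg i) a ↔ a ∈ D.longCoeff Γ i := by
  rw [pmem, if_pos rfl]
  rfl

theorem pmem_neg_left_iff : D.pmem I Γ (Idx.neg i) i a ↔ a ∈ D.longCoeff Γ (Idx.neg i) := by
  rw [← pmem_neg_right_iff (I := I) (i := Idx.neg i), Idx.neg_neg]

theorem pmem_iff_of_fst_ne (h : i.1 ≠ j.1) : D.pmem I Γ i j a ↔ a ∈ I := by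
  rw [pmem, if_neg (Idx.ne_neg_of_fst_ne h.symm)]

theorem neg_pmem (h : D.pmem I Γ i j a) : D.pmem I Γ i j (-a) := by
  by_cases hij : j = Idx.neg i
  · subst hij
    exact pmem_neg_right_iff.2 (neg_mem (pmem_neg_right_iff.1 h))
  · rw [pmem, if_neg hij] at h ⊢
    exact neg_mem h

theorem T_mem_transvGen (hij : i ≠ j) (h : D.pmem I Γ i j a) :
    D.T i j a ∈ D.transvGen n I Γ := by
  rcases Idx.eq_neg_or_fst_ne hij with rfl | hne
  · obtain ⟨g, hg, rfl⟩ := pmem_neg_right_iff.1 h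
    exact .inr ⟨i, g, hg, by rw [T, if_pos rfl]⟩
  · exact .inl ⟨i, j, hij, Idx.ne_neg_of_fst_ne hne, a, (pmem_iff_of_fst_ne hne).1 h,
      by rw [T, if_neg (Idx.ne_neg_of_fst_ne hne.symm)]⟩

theorem T_mem_EU (hij : i ≠ j) (h : D.pmem I Γ i j a) : D.T i j a ∈ D.EU n I Γ :=
  Subgroup.subset_closure ⟨1, one_mem _, _, T_mem_transvGen hij h, by simp⟩

theorem EUmax_le_normalizer_EU (D : FormRingData A) (n : ℕ) (I Γ : AddSubgroup A) :
    D.EUmax n ≤ Subgroup.normalizer (D.EU n I Γ) := by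
  refine Subgroup.le_normalizer_closure_iff.2 ?_
  rintro g hg _ ⟨k, hk, t, ht, rfl⟩
  exact Subgroup.subset_closure ⟨g * k, mul_mem hg hk, t, ht, by group⟩

theorem T_mem_normalizer_EU (hij : i ≠ j) (h : D.pmem ⊤ D.Lambda i j c) :
    D.T i j c ∈ Subgroup.normalizer (D.EU n I Γ) :=
  EUmax_le_normalizer_EU D n I Γ (Subgroup.subset_closure (T_mem_transvGen hij h))

theorem symI_comm (S T : AddSubgroup A) : symI S T = symI T S :=
  sup_comm _ _

theorem mul_mem_symI {S T : AddSubgroup A} {b : A} (ha : a ∈ S) (hb : b ∈ T) :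
    a * b ∈ symI S T :=
  AddSubgroup.mem_sup_left (AddSubgroup.subset_closure ⟨a, ha, b, hb, rfl⟩)

end FormRingData

namespace FormIdeal

open FormRingData Subgroup centralizerMod

variable {A : Type*} [Ring A] {D : FormRingData A} {n : ℕ} {i j : Idx n} {a b c g : A}

/-- The subgroup `EU(2n,(I,Γ)∘(J,Δ))` attached to two form ideals. -/
abbrev EUsym (FI FJ : FormIdeal D) (n : ℕ) : Subgroup (GLn A n) :=
  D.EUsym n FI.I FI.Gamma FJ.I FJ.Gamma

theorem EUsym_comm (FI FJ : FormIdeal D) (n : ℕ) : FI.EUsym FJ n = FJ.EUsym FI n := by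
  rw [EUsym, FormRingData.EUsym, symG, symI_comm, sup_right_comm]
  rfl

variable {FI FJ : FormIdeal D}

theorem bar_conj_mem_symG (hb : b ∈ FJ.I) (hg : g ∈ FI.Gamma) :
    D.bar b * g * D.bar (D.bar b) ∈ D.symG FI.I FI.Gamma FJ.I FJ.Gamma :=
  AddSubgroup.mem_sup_left (AddSubgroup.mem_sup_right
    (AddSubgroup.subset_closure ⟨_, FJ.bar_mem b hb, g, hg, rfl⟩))

theorem mem_of_mem_longCoeff (h : a ∈ D.longCoeff FI.Gamma i) : a ∈ FI.I := by
  obtain ⟨g, hg, rfl⟩ := h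
  exact FI.mul_mem_left _ g (FI.gamma_le_I hg)

theorem mirror_mem (i j : Idx n) (h : a ∈ FI.I) : D.mirror i j a ∈ FI.I :=
  neg_mem (FI.mul_mem_left _ _ (FI.bar_mem a h))

theorem pmem_top (h : D.pmem FI.I FI.Gamma i j a) : D.pmem ⊤ D.Lambda i j a := by
  by_cases hij : j = Idx.neg i
  · subst hij
    exact pmem_neg_right_iff.2
      (longCoeff_mono FI.gamma_le_Lambda (pmem_neg_right_iff.1 h))
  · rw [pmem, if_neg hij]
    exact AddSubgroup.mem_top a

theorem T_mem_normalizer (FJ FK : FormIdeal D) (hij : i ≠ j) (ha : D.pmem FI.I FI.Gamma i j a) :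
    D.T i j a ∈ normalizer (FJ.EUsym FK n) :=
  T_mem_normalizer_EU hij (pmem_top ha)

theorem T_mul_mem_EUsym (hij : i.1 ≠ j.1) (ha : a ∈ FI.I) (hb : b ∈ FJ.I) :
    D.T i j (a * b) ∈ FI.EUsym FJ n :=
  T_mem_EU (Idx.ne_of_fst_ne hij)
    ((pmem_iff_of_fst_ne hij).2 (mul_mem_symI ha hb))

theorem T_long_mem_EUsym (ha : a ∈ D.longCoeff FI.Gamma i) (hb : b ∈ FJ.I) :
    D.T (Idx.neg j) j (D.mirror (Idx.neg i) j b * a * b) ∈ FI.EUsym FJ n :=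
  T_mem_EU (Idx.neg_ne j) (pmem_neg_left_iff.2
    (mirror_mul_mul_mem_longCoeff (fun _ => bar_conj_mem_symG hb) ha))

/-! ### Centrality of `Y_{ij}(a,b)` modulo `EU((I,Γ)∘(J,Δ))` -/

theorem T_mem_normalizer_of_fst_ne (FI FJ : FormIdeal D) (hij : i.1 ≠ j.1) (c : A) :
    D.T i j c ∈ normalizer (FI.EUsym FJ n) :=
  T_mem_normalizer_EU (Idx.ne_of_fst_ne hij)
    ((pmem_iff_of_fst_ne hij).2 (AddSubgroup.mem_top c))

variable {k : Idx n}

theorem T_mem_centralizerMod_Y_of_third (hij : i.1 ≠ j.1) (hik : i.1 ≠ k.1) (hjk : j.1 ≠ k.1)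
    (ha : a ∈ FI.I) (hb : b ∈ FJ.I) (c : A) :
    D.T i k c ∈ centralizerMod (FI.EUsym FJ n) (D.Y i j a b) := by
  refine mem_commutator (T_mem_normalizer_of_fst_ne FI FJ hij a)
    (T_mem_normalizer_of_fst_ne FI FJ hij.symm b)
    (mem_of_commute (T_mem_normalizer_of_fst_ne FI FJ hik c) (commute_T_T hij hik hjk)) ?_
  rw [T_inv (Idx.ne_of_fst_ne hij.symm), commutator_T_T hij.symm hjk hik]
  refine ⟨T_mem_normalizer_of_fst_ne FI FJ hjk _, ?_⟩
  rw [commutator_T_T hij hik hjk]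
  exact T_mul_mem_EUsym hik ha (FJ.mul_mem_right c _ (neg_mem hb))

theorem Y_mirror (hij : i.1 ≠ j.1) :
    D.Y (Idx.neg j) (Idx.neg i) (D.mirror i j a) (D.mirror j i b) = D.Y i j a b := by
  rw [Y, T_mirror hij, T_mirror hij.symm, Y]

theorem T_mem_centralizerMod_Y_short (hn : 3 ≤ n) (hij : i.1 ≠ j.1) (ha : a ∈ FI.I)
    (hb : b ∈ FJ.I) (c : A) : D.T i j c ∈ centralizerMod (FI.EUsym FJ n) (D.Y i j a b) := by
  obtain ⟨h, hhi, hhj⟩ : ∃ h : Fin n, h ≠ i.1 ∧ h ≠ j.1 :=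
    ENat.exists_ne_ne_of_three_le (by simpa using hn) i.1 j.1
  set k : Idx n := (h, true)
  have hik : D.T i k c ∈ centralizerMod (FI.EUsym FJ n) (D.Y i j a b) :=
    T_mem_centralizerMod_Y_of_third hij hhi.symm hhj.symm ha hb c
  have hkj : D.T k j 1 ∈ centralizerMod (FI.EUsym FJ n) (D.Y i j a b) := by
    rw [← T_mirror (i := k) hhj, ← Y_mirror hij]
    exact T_mem_centralizerMod_Y_of_third (i := Idx.neg j) (j := Idx.neg i) (k := Idx.neg k)
      hij.symm hhj.symm hhi.symm (mirror_mem i j ha) (mirror_mem j i hb) _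
  rw [← mul_one c, ← commutator_T_T (j := k) hhi.symm hij hhj]
  exact commutator_le_self _ (commutator_mem_commutator hik hkj)

theorem T_neg_mem_normalizer (FI FJ : FormIdeal D) (hc : c ∈ D.longCoeff D.Lambda i) :
    D.T i (Idx.neg i) c ∈ normalizer (FI.EUsym FJ n) :=
  T_mem_normalizer_EU (Idx.neg_ne i).symm (pmem_neg_right_iff.2 hc)

theorem T_mem_centralizerMod_Y_long_of_ne (hik : i.1 ≠ k.1) (ha : a ∈ D.longCoeff FI.Gamma i)
    (hb : b ∈ D.longCoeff FJ.Gamma (Idx.neg i)) (c : A) :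
    D.T i k c ∈ centralizerMod (FI.EUsym FJ n) (D.Y i (Idx.neg i) a b) := by
  have ha' := longCoeff_mono FI.gamma_le_Lambda ha
  have hb' := longCoeff_mono FJ.gamma_le_Lambda hb
  have hx := T_neg_mem_normalizer FI FJ ha'
  have hy := T_neg_mem_normalizer FI FJ hb'
  rw [Idx.neg_neg] at hy
  refine mem_commutator hx hy
    (mem_of_commute (T_mem_normalizer_of_fst_ne FI FJ hik c) (commute_T_neg_T hik)) ?_
  rw [T_inv (Idx.neg_ne i), commutator_T_neg_T' hik (neg_mem hb')]
  have hbc : -b * c ∈ FJ.I := FJ.mul_mem_right c _ (neg_mem (mem_of_mem_longCoeff hb))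
  refine mul_mem ⟨T_mem_normalizer_of_fst_ne (i := Idx.neg i) FI FJ hik _, ?_⟩
    (mem_of_commute ?_ ?_)
  · rw [commutator_T_neg_T hik ha']
    exact mul_mem (T_mul_mem_EUsym hik (mem_of_mem_longCoeff ha) hbc) (T_long_mem_EUsym ha hbc)
  · refine T_mem_normalizer_EU (Idx.neg_ne k) (pmem_neg_left_iff.2 ?_)
    simpa only [Idx.neg_neg] using mirror_mul_mul_mem_longCoeff (i := Idx.neg i)
      (fun g hg => D.lambda_conj (D.bar c) g hg) (neg_mem hb')
  · simpa only [Idx.neg_neg] using commute_T_neg_T_neg (j := Idx.neg k) hik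

theorem T_mem_centralizerMod_Y_long (hn : 2 ≤ n) (ha : a ∈ D.longCoeff FI.Gamma i)
    (hb : b ∈ D.longCoeff FJ.Gamma (Idx.neg i)) (hc : c ∈ D.longCoeff D.Lambda i) :
    D.T i (Idx.neg i) c ∈ centralizerMod (FI.EUsym FJ n) (D.Y i (Idx.neg i) a b) := by
  have : Nontrivial (Fin n) := Fin.nontrivial_iff_two_le.2 hn
  obtain ⟨h, hhi⟩ := exists_ne i.1
  set k : Idx n := (h, i.2)
  have hcomm : Commute (D.Y i (Idx.neg i) a b) (D.T k (Idx.neg k) c) := by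
    have hi : Commute (D.T i (Idx.neg i) a) (D.T k (Idx.neg k) c) := commute_T_neg_T_neg hhi.symm
    have hi' : Commute (D.T (Idx.neg i) i b) (D.T k (Idx.neg k) c) := by
      simpa only [Idx.neg_neg] using commute_T_neg_T_neg (i := Idx.neg i) (j := k) hhi.symm
    exact ((hi.mul_left hi').mul_left hi.inv_left).mul_left hi'.inv_left
  have hT (l : Idx n) (hl : l.1 = h) (d : A) :
      D.T i l d ∈ centralizerMod (FI.EUsym FJ n) (D.Y i (Idx.neg i) a b) :=
    T_mem_centralizerMod_Y_long_of_ne (fun e => hhi (hl.symm.trans e.symm)) ha hb d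
  have hk : D.T k (Idx.neg k) c ∈ centralizerMod (FI.EUsym FJ n) (D.Y i (Idx.neg i) a b) :=
    mem_of_commute (T_neg_mem_normalizer FI FJ (i := k) hc) hcomm
  have hki (d : A) :
      D.T (Idx.neg k) (Idx.neg i) d ∈ centralizerMod (FI.EUsym FJ n) (D.Y i (Idx.neg i) a b) := by
    rw [← T_mirror (i := Idx.neg k) (j := Idx.neg i) hhi, Idx.neg_neg, Idx.neg_neg]
    exact hT k rfl _
  have hki' : D.T k (Idx.neg i) c ∈ centralizerMod (FI.EUsym FJ n) (D.Y i (Idx.neg i) a b) := by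
    rw [← T_mirror (i := k) (j := Idx.neg i) hhi, Idx.neg_neg]
    exact hT (Idx.neg k) rfl _
  rw [T_neg_eq_commutator_inv_mul (k := k) hhi.symm rfl hc]
  exact mul_mem (inv_mem (commutator_le_self _ (commutator_mem_commutator hk (hki 1)))) hki'

theorem T_mem_centralizerMod_Y (hn : 3 ≤ n) (hij : i ≠ j) (ha : D.pmem FI.I FI.Gamma i j a)
    (hb : D.pmem FJ.I FJ.Gamma j i b) (hc : D.pmem ⊤ D.Lambda i j c) :
    D.T i j c ∈ centralizerMod (FI.EUsym FJ n) (D.Y i j a b) := by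
  rcases Idx.eq_neg_or_fst_ne hij with rfl | hne
  · exact T_mem_centralizerMod_Y_long (by omega) (pmem_neg_right_iff.1 ha)
      (pmem_neg_left_iff.1 hb) (pmem_neg_right_iff.1 hc)
  · exact T_mem_centralizerMod_Y_short hn hne ((pmem_iff_of_fst_ne hne).1 ha)
      ((pmem_iff_of_fst_ne hne.symm).1 hb) c

theorem Y_inv (D : FormRingData A) (i j : Idx n) (a b : A) : (D.Y i j a b)⁻¹ = D.Y j i b a :=
  commutatorElement_inv _ _

theorem T_symm_mem_centralizerMod_Y (hn : 3 ≤ n) (hij : i ≠ j)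
    (ha : D.pmem FI.I FI.Gamma i j a) (hb : D.pmem FJ.I FJ.Gamma j i b)
    (hc : D.pmem ⊤ D.Lambda j i c) :
    D.T j i c ∈ centralizerMod (FI.EUsym FJ n) (D.Y i j a b) := by
  have hY : D.Y j i b a ∈ normalizer (FI.EUsym FJ n) :=
    commutator_mem_normalizer (T_mem_normalizer FI FJ hij.symm hb) (T_mem_normalizer FI FJ hij ha)
  rw [← Y_inv]
  refine mem_inv hY ?_
  rw [EUsym_comm]
  exact T_mem_centralizerMod_Y hn hij.symm hb ha hc

variable {a₁ a₂ b₁ b₂ : A}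

theorem Y_add_left (hn : 3 ≤ n) (hij : i ≠ j) (ha₁ : D.pmem FI.I FI.Gamma i j a₁)
    (ha₂ : D.pmem FI.I FI.Gamma i j a₂) (hb : D.pmem FJ.I FJ.Gamma j i b) :
    D.Y i j (a₁ + a₂) b * (D.Y i j a₁ b * D.Y i j a₂ b)⁻¹ ∈ FI.EUsym FJ n := by
  rw [Y, T_add hij]
  exact commutator_mul_left (T_mem_centralizerMod_Y hn hij ha₂ hb (pmem_top ha₁))
    (T_symm_mem_centralizerMod_Y hn hij ha₂ hb (pmem_top hb))

theorem Y_add_right (hn : 3 ≤ n) (hij : i ≠ j) (ha : D.pmem FI.I FI.Gamma i j a)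
    (hb₁ : D.pmem FJ.I FJ.Gamma j i b₁) (hb₂ : D.pmem FJ.I FJ.Gamma j i b₂) :
    D.Y i j a (b₁ + b₂) * (D.Y i j a b₁ * D.Y i j a b₂)⁻¹ ∈ FI.EUsym FJ n := by
  rw [Y, T_add hij.symm]
  exact commutator_mul_right (T_mem_normalizer FI FJ hij ha)
    (T_symm_mem_centralizerMod_Y hn hij ha hb₂ (pmem_top hb₁))

theorem Y_neg_left (hn : 3 ≤ n) (hij : i ≠ j) (ha : D.pmem FI.I FI.Gamma i j a)
    (hb : D.pmem FJ.I FJ.Gamma j i b) :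
    (D.Y i j a b)⁻¹ * (D.Y i j (-a) b)⁻¹ ∈ FI.EUsym FJ n := by
  have h := Y_add_left hn hij (neg_pmem ha) ha hb
  rwa [neg_add_cancel, Y, T_zero hij, commutatorElement_one_left, one_mul,
    _root_.mul_inv_rev] at h

theorem Y_neg_right (hn : 3 ≤ n) (hij : i ≠ j) (ha : D.pmem FI.I FI.Gamma i j a)
    (hb : D.pmem FJ.I FJ.Gamma j i b) :
    (D.Y i j a b)⁻¹ * (D.Y i j a (-b))⁻¹ ∈ FI.EUsym FJ n := by
  have h := Y_add_right hn hij ha (neg_pmem hb) hb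
  rwa [neg_add_cancel, Y, T_zero hij.symm, commutatorElement_one_right, one_mul,
    _root_.mul_inv_rev] at h

theorem Y_neg_left_mul_Y_neg_right_inv_mem (hn : 3 ≤ n) (hij : i ≠ j)
    (ha : D.pmem FI.I FI.Gamma i j a) (hb : D.pmem FJ.I FJ.Gamma j i b) :
    D.Y i j (-a) b * (D.Y i j a (-b))⁻¹ ∈ FI.EUsym FJ n := by
  simpa [mul_assoc] using
    mul_mem (inv_mem (Y_neg_left hn hij ha hb)) (Y_neg_right hn hij ha hb)

theorem Y_mem_EUsym_of_left (hij : i ≠ j)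
    (ha : D.pmem (symI FI.I FJ.I) (D.symG FI.I FI.Gamma FJ.I FJ.Gamma) i j a)
    (hb : D.pmem FJ.I FJ.Gamma j i b) : D.Y i j a b ∈ FI.EUsym FJ n :=
  commutator_mem_of_mem_left (T_mem_EU hij ha) (T_mem_normalizer FI FJ hij.symm hb)

theorem Y_mem_EUsym_of_right (hij : i ≠ j) (ha : D.pmem FI.I FI.Gamma i j a)
    (hb : D.pmem (symI FJ.I FI.I) (D.symG FJ.I FJ.Gamma FI.I FI.Gamma) j i b) :
    D.Y i j a b ∈ FI.EUsym FJ n := by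
  rw [← inv_mem_iff, Y_inv, EUsym_comm]
  exact Y_mem_EUsym_of_left hij.symm hb ha

theorem Y_mul_left_mem_EUsym (hij : i.1 ≠ j.1) (ha : a ∈ FI.I) (hb₁ : b₁ ∈ FJ.I)
    (hb₂ : b₂ ∈ FJ.I) : D.Y i j (a * b₁) b₂ ∈ FI.EUsym FJ n :=
  Y_mem_EUsym_of_left (Idx.ne_of_fst_ne hij) ((pmem_iff_of_fst_ne hij).2 (mul_mem_symI ha hb₁))
    ((pmem_iff_of_fst_ne hij.symm).2 hb₂)

theorem Y_mul_right_mem_EUsym (hij : i.1 ≠ j.1) (ha₁ : a₁ ∈ FI.I) (ha₂ : a₂ ∈ FI.I)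
    (hb : b ∈ FJ.I) : D.Y i j a₁ (a₂ * b) ∈ FI.EUsym FJ n :=
  Y_mem_EUsym_of_right (Idx.ne_of_fst_ne hij) ((pmem_iff_of_fst_ne hij).2 ha₁)
    ((pmem_iff_of_fst_ne hij.symm).2 (symI_comm FI.I FJ.I ▸ mul_mem_symI ha₂ hb))

theorem Y_bar_conj_left_mem_EUsym (ha : a ∈ D.longCoeff FI.Gamma i) (hb₁ : b₁ ∈ FJ.I)
    (hb₂ : b₂ ∈ D.longCoeff FJ.Gamma (Idx.neg i)) :
    D.Y i (Idx.neg i) (D.bar b₁ * a * b₁) b₂ ∈ FI.EUsym FJ n :=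
  Y_mem_EUsym_of_left (Idx.neg_ne i).symm
    (pmem_neg_right_iff.2 (bar_mul_mul_mem_longCoeff (fun _ => bar_conj_mem_symG hb₁) ha))
    (pmem_neg_left_iff.2 hb₂)

theorem Y_bar_conj_right_mem_EUsym (ha₁ : a₁ ∈ D.longCoeff FI.Gamma i) (ha₂ : a₂ ∈ FI.I)
    (hb : b ∈ D.longCoeff FJ.Gamma (Idx.neg i)) :
    D.Y i (Idx.neg i) a₁ (D.bar a₂ * b * a₂) ∈ FI.EUsym FJ n :=
  Y_mem_EUsym_of_right (Idx.neg_ne i).symm (pmem_neg_right_iff.2 ha₁)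
    (pmem_neg_left_iff.2 (bar_mul_mul_mem_longCoeff (fun _ => bar_conj_mem_symG ha₂) hb))

end FormIdeal

/-- Theorem (symbol properties of elementary commutators): additivity in both
arguments, inverses, and vanishing properties, all modulo
`EU(2n,(I,Γ)∘(J,Δ))`. -/
theorem statement10 {A : Type*} [Ring A] (D : FormRingData A) (n : ℕ) (hn : 3 ≤ n)
    (FI FJ : FormIdeal D) :
    (∀ i j : Idx n, i ≠ j → ∀ a₁ a₂ b : A,
      D.pmem FI.I FI.Gamma i j a₁ → D.pmem FI.I FI.Gamma i j a₂ →
      D.pmem FJ.I FJ.Gamma j i b →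
      D.Y i j (a₁ + a₂) b * (D.Y i j a₁ b * D.Y i j a₂ b)⁻¹ ∈
        D.EUsym n FI.I FI.Gamma FJ.I FJ.Gamma) ∧
    (∀ i j : Idx n, i ≠ j → ∀ a b₁ b₂ : A,
      D.pmem FI.I FI.Gamma i j a → D.pmem FJ.I FJ.Gamma j i b₁ →
      D.pmem FJ.I FJ.Gamma j i b₂ →
      D.Y i j a (b₁ + b₂) * (D.Y i j a b₁ * D.Y i j a b₂)⁻¹ ∈
        D.EUsym n FI.I FI.Gamma FJ.I FJ.Gamma) ∧
    (∀ i j : Idx n, i ≠ j → ∀ a b : A,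
      D.pmem FI.I FI.Gamma i j a → D.pmem FJ.I FJ.Gamma j i b →
      (D.Y i j a b)⁻¹ * (D.Y i j (-a) b)⁻¹ ∈
          D.EUsym n FI.I FI.Gamma FJ.I FJ.Gamma ∧
        D.Y i j (-a) b * (D.Y i j a (-b))⁻¹ ∈
          D.EUsym n FI.I FI.Gamma FJ.I FJ.Gamma) ∧
    (∀ i j : Idx n, i ≠ j → i ≠ Idx.neg j →
      ∀ a ∈ FI.I, ∀ a₁ ∈ FI.I, ∀ a₂ ∈ FI.I, ∀ b ∈ FJ.I, ∀ b₁ ∈ FJ.I, ∀ b₂ ∈ FJ.I,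
      D.Y i j (a * b₁) b₂ ∈ D.EUsym n FI.I FI.Gamma FJ.I FJ.Gamma ∧
        D.Y i j a₁ (a₂ * b) ∈ D.EUsym n FI.I FI.Gamma FJ.I FJ.Gamma) ∧
    (∀ i : Idx n, ∀ a a₁ b b₂ : A,
      (∃ g ∈ FI.Gamma, a = D.lpow (-(Idx.eps i + 1) / 2) * g) →
      (∃ g ∈ FI.Gamma, a₁ = D.lpow (-(Idx.eps i + 1) / 2) * g) →
      (∃ d ∈ FJ.Gamma, b = D.lpow ((Idx.eps i - 1) / 2) * d) →
      (∃ d ∈ FJ.Gamma, b₂ = D.lpow ((Idx.eps i - 1) / 2) * d) →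
      ∀ b₁ ∈ FJ.I, ∀ a₂ ∈ FI.I,
      D.Y i (Idx.neg i) (D.bar b₁ * a * b₁) b₂ ∈
          D.EUsym n FI.I FI.Gamma FJ.I FJ.Gamma ∧
        D.Y i (Idx.neg i) a₁ (D.bar a₂ * b * a₂) ∈
          D.EUsym n FI.I FI.Gamma FJ.I FJ.Gamma) := by
  refine ⟨fun i j hij a₁ a₂ b => FormIdeal.Y_add_left hn hij,
    fun i j hij a b₁ b₂ => FormIdeal.Y_add_right hn hij,
    fun i j hij a b ha hb => ⟨FormIdeal.Y_neg_left hn hij ha hb,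
      FormIdeal.Y_neg_left_mul_Y_neg_right_inv_mem hn hij ha hb⟩,
    fun i j hij hneg a ha a₁ ha₁ a₂ ha₂ b hb b₁ hb₁ b₂ hb₂ => ?_,
    fun i a a₁ b b₂ ha ha₁ hb hb₂ b₁ hb₁ a₂ ha₂ => ?_⟩
  · have hfst : i.1 ≠ j.1 :=
      (Idx.eq_neg_or_fst_ne hij).resolve_left fun h => hneg (by rw [h, Idx.neg_neg])
    exact ⟨FormIdeal.Y_mul_left_mem_EUsym hfst ha hb₁ hb₂,
      FormIdeal.Y_mul_right_mem_EUsym hfst ha₁ ha₂ hb⟩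
  · have hb' := FormRingData.mem_longCoeff_neg_iff.2 hb
    have hb₂' := FormRingData.mem_longCoeff_neg_iff.2 hb₂
    exact ⟨FormIdeal.Y_bar_conj_left_mem_EUsym ha hb₁ hb₂',
      FormIdeal.Y_bar_conj_right_mem_EUsym ha₁ ha₂ hb'⟩
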